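/- Let φ : ℝⁿ → ℝ, g_i : ℝⁿ → ℝ (i = 1,…,m) and h_j : ℝⁿ → ℝ (j = 1,…,r) be continuous, let δ > 0, let x̄ satisfy g_i(x̄) ≤ 0 for all i and h_j(x̄) = 0 for all j, and suppose φ(x̄) = 0 and φ(x) ≥ 0 for every x in B(x̄, δ) ∩ F, where B(x̄, δ) is the closed ball of radius δ centered at x̄ and F = {x : g_i(x) ≤ 0 ∀i, h_j(x) = 0 ∀j}. For each k ∈ ℕ let x^k be a minimizer over B(x̄, δ) of φ_k(x) := φ(x) + (k/2)[Σ_{i=1}^m (max(g_i(x), 0))² + Σ_{j=1}^r (h_j(x))²] + (1/2)‖x − x̄‖². Then the sequence {x^k} converges to x̄. -/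

import Mathlib

open Filter Topology

/-!
Each penalized minimizer is compared with the reference point `a`, which is feasible and so pays no
penalty: the penalized values stay below the objective at `a`. Since the penalty weights tend to
infinity, every cluster point `z` of the minimizers is feasible, and lower semicontinuity bounds the
regularized objective at `z` by the objective at `a`. As `a` is optimal among the feasible points,
the term `dist z a ^ 2 / 2` vanishes. So `a` is the only cluster point, and compactness gives
convergence.
-/

section PenalizedBound

variable {X ι : Type*} [TopologicalSpace X] {K : Set X} {f P : X → ℝ} {l : Filter ι}
  {x : ι → X} {c : ι → ℝ} {M : ℝ}

theorem le_of_lowerSemicontinuousWithinAt_of_tendsto {β : Type*} [LinearOrder β] {f : X → β}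
    {b : β} {z : X} (hf : LowerSemicontinuousWithinAt f K z) (hx : Tendsto x l (𝓝[K] z))
    (hle : ∃ᶠ k in l, f (x k) ≤ b) : f z ≤ b := by
  by_contra! hb
  obtain ⟨k, hle_k, hlt_k⟩ := (hle.and_eventually (hx.eventually (hf b hb))).exists
  exact hle_k.not_gt hlt_k

theorem penalty_nonpos_of_tendsto {z : X}
    (hf : LowerSemicontinuousWithinAt f K z) (hP : LowerSemicontinuousWithinAt P K z)
    (hx : Tendsto x l (𝓝[K] z)) (hc : Tendsto c l atTop)
    (hle : ∃ᶠ k in l, f (x k) + c k * P (x k) ≤ M) : P z ≤ 0 := by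
  by_contra! hPz
  have hP_lower : ∀ᶠ k in l, P z / 2 < P (x k) := hx.eventually (hP _ (half_lt_self hPz))
  have hf_lower : ∀ᶠ k in l, f z - 1 < f (x k) := hx.eventually (hf _ (sub_one_lt _))
  have hpenalty : Tendsto (fun k ↦ c k * P (x k)) l atTop := by
    refine tendsto_atTop_mono' l ?_ (hc.atTop_mul_const (half_pos hPz))
    filter_upwards [hP_lower, hc.eventually_ge_atTop 0] with k hPk hck
    exact mul_le_mul_of_nonneg_left hPk.le hck
  have hvalue : Tendsto (fun k ↦ f (x k) + c k * P (x k)) l atTop :=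
    tendsto_atTop_add_left_of_le' l _ (hf_lower.mono fun _ ↦ le_of_lt) hpenalty
  obtain ⟨k, hle_k, hgt_k⟩ := (hle.and_eventually (hvalue.eventually_gt_atTop M)).exists
  exact hle_k.not_gt hgt_k

theorem tendsto_of_penalized_le (hK : IsCompact K)
    (hf : LowerSemicontinuousOn f K) (hP : LowerSemicontinuousOn P K)
    (hP_nonneg : ∀ y ∈ K, 0 ≤ P y) (hc : Tendsto c l atTop) (hx : ∀ᶠ k in l, x k ∈ K)
    (hle : ∀ᶠ k in l, f (x k) + c k * P (x k) ≤ M) {a : X}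
    (hunique : ∀ z ∈ K, P z = 0 → f z ≤ M → z = a) : Tendsto x l (𝓝 a) := by
  refine hK.tendsto_nhds_of_unique_mapClusterPt hx fun z hz hcluster ↦ ?_
  obtain ⟨U, hUl, hUz⟩ := mapClusterPt_iff_ultrafilter.1 hcluster
  have hUz_within : Tendsto x U (𝓝[K] z) := tendsto_nhdsWithin_iff.2 ⟨hUz, hUl hx⟩
  have hPz : P z ≤ 0 :=
    penalty_nonpos_of_tendsto (hf z hz) (hP z hz) hUz_within (hc.mono_left hUl)
      (hle.filter_mono hUl).frequently
  have hf_le : ∀ᶠ k in l, f (x k) ≤ M := by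
    filter_upwards [hle, hx, hc.eventually_ge_atTop 0] with k hle_k hxk hck
    exact (le_add_of_nonneg_right (mul_nonneg hck (hP_nonneg _ hxk))).trans hle_k
  exact hunique z hz (hPz.antisymm (hP_nonneg z hz))
    (le_of_lowerSemicontinuousWithinAt_of_tendsto (hf z hz) hUz_within
      (hf_le.filter_mono hUl).frequently)

end PenalizedBound

section Constraints

variable {X ι κ : Type*} {g : ι → X → ℝ} {h : κ → X → ℝ}

/-- The feasible set of the inequality constraints `g i ≤ 0` and the equality constraints
`h j = 0`. -/
def feasibleSet (g : ι → X → ℝ) (h : κ → X → ℝ) : Set X :=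
  {y | (∀ i, g i y ≤ 0) ∧ ∀ j, h j y = 0}

variable [Fintype ι] [Fintype κ]

/-- The quadratic external penalty of the constraints `g i ≤ 0` and `h j = 0`, without the
penalty weight. -/
def quadraticPenalty (g : ι → X → ℝ) (h : κ → X → ℝ) (y : X) : ℝ :=
  ∑ i, max (g i y) 0 ^ 2 + ∑ j, h j y ^ 2

theorem quadraticPenalty_nonneg (y : X) : 0 ≤ quadraticPenalty g h y := by
  unfold quadraticPenalty
  positivity

theorem quadraticPenalty_eq_zero_iff {y : X} :
    quadraticPenalty g h y = 0 ↔ y ∈ feasibleSet g h := by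
  rw [quadraticPenalty, add_eq_zero_iff_of_nonneg (by positivity) (by positivity),
    Finset.sum_eq_zero_iff_of_nonneg fun _ _ ↦ sq_nonneg _,
    Finset.sum_eq_zero_iff_of_nonneg fun _ _ ↦ sq_nonneg _]
  simp [feasibleSet]

theorem lowerSemicontinuousOn_quadraticPenalty [TopologicalSpace X] {K : Set X}
    (hg : ∀ i, LowerSemicontinuousOn (g i) K) (hh : ∀ j, ContinuousOn (h j) K) :
    LowerSemicontinuousOn (quadraticPenalty g h) K := by
  have hmono : Monotone fun t : ℝ ↦ max t 0 ^ 2 := fun s t hst ↦ by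
    dsimp only
    gcongr
  have hg_sq : ∀ i, LowerSemicontinuousOn (fun y ↦ max (g i y) 0 ^ 2) K := fun i ↦
    (by fun_prop : Continuous fun t : ℝ ↦ max t 0 ^ 2).comp_lowerSemicontinuousOn (hg i) hmono
  have hh_sq : ContinuousOn (fun y ↦ ∑ j, h j y ^ 2) K := by fun_prop
  exact (lowerSemicontinuousOn_sum fun i _ ↦ hg_sq i).add hh_sq.lowerSemicontinuousOn

end Constraints

theorem penalty_iterates_converge_general {X ι κ α : Type*} [MetricSpace X]
    [Fintype ι] [Fintype κ] {φ : X → ℝ} {g : ι → X → ℝ} {h : κ → X → ℝ} {K : Set X} {a : X}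
    (hK : IsCompact K) (hφ : LowerSemicontinuousOn φ K)
    (hg : ∀ i, LowerSemicontinuousOn (g i) K) (hh : ∀ j, ContinuousOn (h j) K)
    (ha : a ∈ K ∩ feasibleSet g h) (ha_min : IsMinOn φ (K ∩ feasibleSet g h) a)
    {l : Filter α} {c : α → ℝ} {x : α → X} (hc : Tendsto c l atTop) (hx : ∀ᶠ k in l, x k ∈ K)
    (hmin : ∀ᶠ k in l,
      IsMinOn (fun y ↦ φ y + c k * quadraticPenalty g h y + 1 / 2 * dist y a ^ 2) K (x k)) :
    Tendsto x l (𝓝 a) := by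
  have hdist : ContinuousOn (fun y ↦ 1 / 2 * dist y a ^ 2) K := by fun_prop
  refine tendsto_of_penalized_le (M := φ a) hK (hφ.add hdist.lowerSemicontinuousOn)
    (lowerSemicontinuousOn_quadraticPenalty hg hh) (fun y _ ↦ quadraticPenalty_nonneg y)
    hc hx ?_ fun z hzK hPz hz_le ↦ ?_
  · filter_upwards [hmin] with k hk
    have hcompare := isMinOn_iff.1 hk a ha.1
    rw [quadraticPenalty_eq_zero_iff.2 ha.2, dist_self] at hcompare
    linarith
  · have hφ_le : φ a ≤ φ z := ha_min ⟨hzK, quadraticPenalty_eq_zero_iff.1 hPz⟩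
    have hdist_sq : dist z a ^ 2 ≤ 0 := by linarith
    exact dist_eq_zero.1 (sq_nonpos_iff _ |>.1 hdist_sq)

/-- **Convergence of the external penalty iterates.** If `φ(x̄) = 0`,
`φ ≥ 0` on the feasible points of the closed ball `B(x̄, δ)`, and `x^k`
minimizes the penalized function `φ_k` over `B(x̄, δ)`, then `x^k → x̄`. -/
theorem penalty_iterates_converge
    {n m r : ℕ}
    (φ : EuclideanSpace ℝ (Fin n) → ℝ)
    (g : Fin m → EuclideanSpace ℝ (Fin n) → ℝ)
    (h : Fin r → EuclideanSpace ℝ (Fin n) → ℝ)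
    (hφc : Continuous φ) (hgc : ∀ i, Continuous (g i)) (hhc : ∀ j, Continuous (h j))
    (δ : ℝ) (hδ : 0 < δ)
    (xbar : EuclideanSpace ℝ (Fin n))
    (hxg : ∀ i, g i xbar ≤ 0) (hxh : ∀ j, h j xbar = 0)
    (hφ0 : φ xbar = 0)
    (hφnn : ∀ x ∈ Metric.closedBall xbar δ,
      ((∀ i, g i x ≤ 0) ∧ (∀ j, h j x = 0)) → 0 ≤ φ x)
    (x : ℕ → EuclideanSpace ℝ (Fin n))
    (hmem : ∀ k, x k ∈ Metric.closedBall xbar δ)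
    (hmin : ∀ k : ℕ, ∀ y ∈ Metric.closedBall xbar δ,
      φ (x k) + ((k : ℝ) / 2) * (∑ i, max (g i (x k)) 0 ^ 2 + ∑ j, h j (x k) ^ 2)
          + (1 / 2) * ‖x k - xbar‖ ^ 2
        ≤ φ y + ((k : ℝ) / 2) * (∑ i, max (g i y) 0 ^ 2 + ∑ j, h j y ^ 2)
          + (1 / 2) * ‖y - xbar‖ ^ 2) :
    Tendsto x atTop (𝓝 xbar) := by
  exact penalty_iterates_converge_general (isCompact_closedBall xbar δ)
    hφc.continuousOn.lowerSemicontinuousOn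
    (fun i ↦ (hgc i).continuousOn.lowerSemicontinuousOn) (fun j ↦ (hhc j).continuousOn)
    ⟨Metric.mem_closedBall_self hδ.le, hxg, hxh⟩
    (fun y hy ↦ hφ0.trans_le (hφnn y hy.1 hy.2))
    (tendsto_natCast_atTop_atTop.atTop_div_const two_pos) (.of_forall hmem)
    (.of_forall fun k ↦ by
      simpa only [isMinOn_iff, dist_eq_norm, quadraticPenalty] using hmin k)
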